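/- Let Γ_n ⊂ ℝ^d be the subgroup {(l₁/2^{m₁},…,l_d/2^{m_d}) : l₁,…,l_d ∈ ℤ} where m_j = ⌊χ_j n⌋ for fixed positive reals χ₁,…,χ_d, and let ξ : ℝ^d → Γ_n map each point to the unique element of Γ_n lying in its cell of the partition 𝓔_n. Then for compactly supported Borel probability measures θ, σ on ℝ^d and every k ≥ 1, H(θ^{*k} * σ, 𝓔_n) − H(σ, 𝓔_n) ≤ k·(H(θ*σ, 𝓔_n) − H(σ, 𝓔_n)) + O(k), where the implicit constant depends only on d and χ₁,…,χ_d. -/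

import Mathlib

open MeasureTheory

/-- The cell of the level-`n` non-conformal partition `𝓔_n` of `ℝ^d` indexed by
`k : Fin d → ℤ`: a product of dyadic intervals of levels `⌊χ_j n⌋`. -/
noncomputable def Ecell (d : ℕ) (χ : Fin d → ℝ) (n : ℕ) (k : Fin d → ℤ) :
    Set (Fin d → ℝ) :=
  {x | ∀ j, (k j : ℝ) / 2 ^ ⌊χ j * n⌋ ≤ x j ∧ x j < ((k j : ℝ) + 1) / 2 ^ ⌊χ j * n⌋}

/-- Entropy (base 2) of a measure on `ℝ^d` with respect to `𝓔_n`. -/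
noncomputable def entE (d : ℕ) (χ : Fin d → ℝ) (n : ℕ) (θ : Measure (Fin d → ℝ)) : ℝ :=
  ∑' k : Fin d → ℤ,
    -((θ (Ecell d χ n k)).toReal * Real.logb 2 (θ (Ecell d χ n k)).toReal)

/-- Convolution of two measures on `ℝ^d`. -/
noncomputable def mconv {d : ℕ} (θ σ : Measure (Fin d → ℝ)) : Measure (Fin d → ℝ) :=
  Measure.map (fun p : (Fin d → ℝ) × (Fin d → ℝ) => p.1 + p.2) (θ.prod σ)

/-- `k`-fold self-convolution (`k = 0` gives the Dirac mass at `0`). -/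
noncomputable def mconvPow {d : ℕ} (θ : Measure (Fin d → ℝ)) : ℕ → Measure (Fin d → ℝ)
  | 0 => Measure.dirac 0
  | k + 1 => mconv (mconvPow θ k) θ

/-!
The Kaimanovich–Vershik inequality `H(X + Y + Z) + H(Z) ≤ H(X + Z) + H(Y + Z)`, for independent
`X, Y, Z` in a countable abelian group, is a Gibbs inequality: under the joint law the expectation
of `P(X + Z) P(Y + Z) / (P(Z) P(X + Y + Z))`, each factor being the probability of the observed
value, is at most `1`, and Jensen's inequality for `log` concludes. Sending a point of `ℝ^d` to
the index of its cell is additive up to a defect in `{0, 1}^d`, and an error confined to a finite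
set `D` changes an entropy by at most `log |D|`. So the inequality survives discretization up to
`O(d)`, and iterating it with `X ∼ θ^{*k}`, `Y ∼ θ`, `Z ∼ σ` adds this error `k` times.
-/

open scoped ENNReal Pointwise

/-- The information content `-log p` (in nats) of an event of probability `p`, with value `∞` at
`p = 0`. Taking values in `ℝ≥0∞` makes every entropy below an unconditional integral. -/
noncomputable def surprisal (p : ℝ≥0∞) : ℝ≥0∞ :=
  (ENNReal.log p⁻¹).toENNReal

theorem surprisal_ofReal {p : ℝ} (hp : 0 < p) :
    surprisal (ENNReal.ofReal p) = ENNReal.ofReal (-Real.log p) := by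
  rw [surprisal, ← ENNReal.ofReal_inv_of_pos hp, ENNReal.log_ofReal_of_pos (inv_pos.2 hp),
    Real.log_inv, EReal.real_coe_toENNReal]

theorem surprisal_inv_natCast (n : ℕ) :
    surprisal (n : ℝ≥0∞)⁻¹ = ENNReal.ofReal (Real.log n) := by
  rcases n.eq_zero_or_pos with rfl | hn
  · simp [surprisal]
  · rw [← ENNReal.ofReal_natCast, ← ENNReal.ofReal_inv_of_pos (by positivity),
      surprisal_ofReal (by positivity), Real.log_inv, neg_neg]

theorem surprisal_mul {p q : ℝ≥0∞} (hp : p ≤ 1) (hq : q ≤ 1) :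
    surprisal (p * q) = surprisal p + surprisal q := by
  have hp_top : p ≠ ∞ := ne_top_of_le_ne_top ENNReal.one_ne_top hp
  have hq_top : q ≠ ∞ := ne_top_of_le_ne_top ENNReal.one_ne_top hq
  rw [surprisal, ENNReal.mul_inv (.inr hq_top) (.inl hp_top), ENNReal.log_mul_add,
    EReal.toENNReal_add (by simpa) (by simpa), surprisal, surprisal]

theorem surprisal_mul_self_ne_top {p : ℝ≥0∞} (hp : p ≠ ∞) : surprisal p * p ≠ ∞ := by
  rcases eq_or_ne p 0 with rfl | hp0
  · simp
  · exact ENNReal.mul_ne_top (by simp [surprisal, hp0]) hp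

theorem toReal_surprisal_mul_self {p : ℝ≥0∞} (hp : p ≤ 1) :
    (surprisal p * p).toReal = Real.negMulLog p.toReal := by
  rcases eq_or_ne p 0 with rfl | hp0
  · simp
  have hp_top : p ≠ ∞ := ne_top_of_le_ne_top ENNReal.one_ne_top hp
  have hlog : Real.log p.toReal ≤ 0 :=
    Real.log_nonpos ENNReal.toReal_nonneg (ENNReal.toReal_le_of_le_ofReal zero_le_one (by simpa))
  have hsurprisal : surprisal p = ENNReal.ofReal (-Real.log p.toReal) := by
    rw [← surprisal_ofReal (ENNReal.toReal_pos hp0 hp_top), ENNReal.ofReal_toReal hp_top]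
  rw [hsurprisal, ENNReal.toReal_mul, ENNReal.toReal_ofReal (neg_nonneg.2 hlog), Real.negMulLog]
  ring

theorem surprisal_add_one_le {p : ℝ≥0∞} (hp : p ≤ 1) (q : ℝ≥0∞) :
    surprisal p + 1 ≤ surprisal q + q / p := by
  rcases eq_or_ne q 0 with rfl | hq
  · simp [surprisal]
  rcases eq_or_ne p 0 with rfl | hp0
  · simp [ENNReal.div_zero hq]
  have hp_top : p ≠ ∞ := ne_top_of_le_ne_top ENNReal.one_ne_top hp
  rcases eq_or_ne q ∞ with rfl | hq_top
  · simp [ENNReal.top_div_of_ne_top hp_top]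
  lift p to NNReal using hp_top
  lift q to NNReal using hq_top
  have hp_pos : (0 : ℝ) < p := by simpa [pos_iff_ne_zero] using hp0
  have hq_pos : (0 : ℝ) < q := by simpa [pos_iff_ne_zero] using hq
  have hlog_p : 0 ≤ -Real.log p := by
    simpa using Real.log_nonpos hp_pos.le (by exact_mod_cast hp)
  have hlog : -Real.log p + 1 ≤ -Real.log q + q / p := by
    have := Real.log_le_sub_one_of_pos (div_pos hq_pos hp_pos)
    rw [Real.log_div hq_pos.ne' hp_pos.ne'] at this
    linarith
  rw [← ENNReal.ofReal_coe_nnreal, ← ENNReal.ofReal_coe_nnreal (p := q), surprisal_ofReal hp_pos,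
    surprisal_ofReal hq_pos, ← ENNReal.ofReal_div_of_pos hp_pos, ← ENNReal.ofReal_one,
    ← ENNReal.ofReal_add hlog_p zero_le_one]
  exact (ENNReal.ofReal_le_ofReal hlog).trans ENNReal.ofReal_add_le

theorem lintegral_surprisal_le {Ω : Type*} [MeasurableSpace Ω] {P : Measure Ω}
    [IsProbabilityMeasure P] {u v : Ω → ℝ≥0∞} (hu : ∀ ω, u ω ≤ 1)
    (hvu : Measurable fun ω ↦ v ω / u ω) (hvu_le : ∫⁻ ω, v ω / u ω ∂P ≤ 1) :
    ∫⁻ ω, surprisal (u ω) ∂P ≤ ∫⁻ ω, surprisal (v ω) ∂P := by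
  have h : ∫⁻ ω, surprisal (u ω) ∂P + 1 ≤ ∫⁻ ω, surprisal (v ω) ∂P + 1 :=
    calc ∫⁻ ω, surprisal (u ω) ∂P + 1
      _ = ∫⁻ ω, (surprisal (u ω) + 1) ∂P := by simp [lintegral_add_right _ measurable_const]
      _ ≤ ∫⁻ ω, (surprisal (v ω) + v ω / u ω) ∂P :=
        lintegral_mono fun ω ↦ surprisal_add_one_le (hu ω) (v ω)
      _ = ∫⁻ ω, surprisal (v ω) ∂P + ∫⁻ ω, v ω / u ω ∂P := lintegral_add_right _ hvu
      _ ≤ ∫⁻ ω, surprisal (v ω) ∂P + 1 := by gcongr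
  exact (ENNReal.add_le_add_iff_right ENNReal.one_ne_top).1 h

section Discrete

variable {S : Type*} [MeasurableSpace S]

/-- The Shannon entropy (in nats) of a measure with respect to the partition into singletons; it is
meant for discrete `S` and may be `∞`. -/
noncomputable def entropy (μ : Measure S) : ℝ≥0∞ :=
  ∫⁻ s, surprisal (μ {s}) ∂μ

variable [MeasurableSingletonClass S]

theorem entropy_ne_top_of_finite_support {μ : Measure S} [IsFiniteMeasure μ] {A : Finset S}
    (hA : ∀ᵐ s ∂μ, s ∈ A) : entropy μ ≠ ∞ := by
  have hrestrict : μ.restrict A = μ := Measure.restrict_eq_self_of_ae_mem hA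
  have hsum : entropy μ = ∑ s ∈ A, surprisal (μ {s}) * μ {s} := by
    rw [← lintegral_finset, hrestrict, entropy]
  rw [hsum]
  exact ENNReal.sum_ne_top.2 fun s _ ↦ surprisal_mul_self_ne_top (measure_ne_top μ {s})

variable [Countable S]

theorem entropy_eq_lintegral_of_measurePreserving {Ω : Type*} [MeasurableSpace Ω] {P : Measure Ω}
    {μ : Measure S} {f : Ω → S} (hf : MeasurePreserving f P μ) :
    entropy μ = ∫⁻ ω, surprisal (μ {f ω}) ∂P :=
  (hf.lintegral_comp .of_discrete).symm

theorem toReal_entropy (μ : Measure S) [IsProbabilityMeasure μ] :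
    (entropy μ).toReal = ∑' s, Real.negMulLog (μ.real {s}) := by
  rw [entropy, lintegral_countable', ENNReal.tsum_toReal_eq fun s ↦
    surprisal_mul_self_ne_top (measure_ne_top μ {s})]
  simp_rw [toReal_surprisal_mul_self prob_le_one, Measure.real]

theorem tsum_measure_singleton (μ : Measure S) : ∑' s, μ {s} = μ Set.univ := by
  simpa using Measure.tsum_indicator_apply_singleton μ Set.univ MeasurableSet.univ

theorem lintegral_div_measure_singleton_le {μ : Measure S} (q : S → ℝ≥0∞) :
    ∫⁻ s, q s / μ {s} ∂μ ≤ ∑' s, q s := by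
  rw [lintegral_countable']
  gcongr with s
  rw [mul_comm]
  exact ENNReal.mul_div_le

end Discrete

theorem measurePreserving_add {M : Type*} [AddMonoid M] [MeasurableSpace M] [MeasurableAdd₂ M]
    (μ ν : Measure M) : MeasurePreserving (fun p : M × M ↦ p.1 + p.2) (μ.prod ν) (μ ∗ ν) :=
  measurable_add.measurePreserving _

section AddGroup

variable {G : Type*} [AddGroup G] [Countable G] [MeasurableSpace G] [MeasurableSingletonClass G]

theorem conv_singleton (μ ν : Measure G) (w : G) :
    (μ ∗ ν) {w} = ∫⁻ x, ν {-x + w} ∂μ := by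
  rw [Measure.conv, Measure.map_apply measurable_add (measurableSet_singleton w),
    Measure.prod_apply (measurable_add (measurableSet_singleton w))]
  congr! 3 with x
  ext y
  simp [eq_neg_add_iff_add_eq]

theorem tsum_measure_neg_add_singleton (ν : Measure G) (e : G) :
    ∑' s, ν {-e + s} = ν Set.univ := by
  rw [show ∑' s, ν {-e + s} = ∑' s, ν {s} from (Equiv.addLeft (-e)).tsum_eq fun s ↦ ν {s},
    tsum_measure_singleton]

theorem entropy_le_add_log_card {Ω : Type*} [MeasurableSpace Ω] {P : Measure Ω}
    [IsProbabilityMeasure P] {μ ν : Measure G} {f g : Ω → G}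
    (hf : MeasurePreserving f P μ) (hg : MeasurePreserving g P ν) {D : Finset G}
    (hD : ∀ ω, f ω - g ω ∈ D) :
    entropy μ ≤ entropy ν + ENNReal.ofReal (Real.log D.card) := by
  have : IsProbabilityMeasure μ := hf.map_eq ▸ Measure.isProbabilityMeasure_map hf.aemeasurable
  have : IsProbabilityMeasure ν := hg.map_eq ▸ Measure.isProbabilityMeasure_map hg.aemeasurable
  obtain ⟨ω₀⟩ := P.nonempty_of_neZero
  have hcard : (D.card : ℝ≥0∞)⁻¹ ≤ 1 := by
    simpa [Nat.one_le_iff_ne_zero] using Finset.ne_empty_of_mem (hD ω₀)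
  let q : G → ℝ≥0∞ := fun s ↦ (D.card : ℝ≥0∞)⁻¹ * ∑ e ∈ D, ν {-e + s}
  have hq : ∑' s, q s ≤ 1 := by
    rw [ENNReal.tsum_mul_left, Summable.tsum_finsetSum fun _ _ ↦ ENNReal.summable]
    simp [tsum_measure_neg_add_singleton, ENNReal.inv_mul_le_one]
  have hνq (ω : Ω) : (D.card : ℝ≥0∞)⁻¹ * ν {g ω} ≤ q (f ω) := by
    have := Finset.single_le_sum (f := fun e ↦ ν {-e + f ω}) (fun _ _ ↦ zero_le) (hD ω)
    exact mul_right_mono (by simpa using this)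
  have hν : Measurable fun s ↦ ν {s} := .of_discrete
  have hμ : Measurable fun s ↦ μ {s} := .of_discrete
  calc entropy μ
    _ = ∫⁻ ω, surprisal (μ {f ω}) ∂P := entropy_eq_lintegral_of_measurePreserving hf
    _ ≤ ∫⁻ ω, surprisal ((D.card : ℝ≥0∞)⁻¹ * ν {g ω}) ∂P := by
      refine lintegral_surprisal_le (fun _ ↦ prob_le_one)
        (((hν.comp hg.measurable).const_mul _).div (hμ.comp hf.measurable)) ?_
      calc ∫⁻ ω, (D.card : ℝ≥0∞)⁻¹ * ν {g ω} / μ {f ω} ∂P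
        _ ≤ ∫⁻ ω, q (f ω) / μ {f ω} ∂P := by gcongr with ω; exact hνq ω
        _ = ∫⁻ s, q s / μ {s} ∂μ := hf.lintegral_comp (f := fun s ↦ q s / μ {s}) .of_discrete
        _ ≤ 1 := (lintegral_div_measure_singleton_le q).trans hq
    _ = entropy ν + ENNReal.ofReal (Real.log D.card) := by
      simp_rw [surprisal_mul hcard prob_le_one, surprisal_inv_natCast]
      rw [lintegral_add_left measurable_const, lintegral_const, measure_univ, mul_one, add_comm,
        entropy_eq_lintegral_of_measurePreserving hg]

end AddGroup

section AddCommGroup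

variable {G : Type*} [AddCommGroup G] [Countable G] [MeasurableSpace G]
  [MeasurableSingletonClass G]

theorem lintegral_mul_div_le_tsum (ρ : Measure G) [IsFiniteMeasure ρ] (a b : G → ℝ≥0∞)
    {t : G → ℝ≥0∞} (ht : ∀ w, t w ≠ ∞) (x y : G) :
    ∫⁻ z, a (x + z) * b (y + z) / (ρ {z} * t (x + (y + z))) ∂ρ ≤
      ∑' w, b (-x + w) * (a (-y + w) / t w) := by
  let F : G → ℝ≥0∞ := fun w ↦ b (-x + w) * (a (-y + w) / t w)
  have hF (z : G) :
      a (x + z) * b (y + z) / (ρ {z} * t (x + (y + z))) = F (x + y + z) / ρ {z} := by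
    have hx : -x + (x + y + z) = y + z := by abel
    have hy : -y + (x + y + z) = x + z := by abel
    simp only [F, hx, hy, ← add_assoc, div_eq_mul_inv,
      ENNReal.mul_inv (.inr (ht _)) (.inl (measure_ne_top _ _))]
    ring
  calc ∫⁻ z, a (x + z) * b (y + z) / (ρ {z} * t (x + (y + z))) ∂ρ
    _ = ∫⁻ z, F (x + y + z) / ρ {z} ∂ρ := by simp_rw [hF]
    _ ≤ ∑' z, F (x + y + z) := lintegral_div_measure_singleton_le _
    _ = ∑' w, F w := (Equiv.addLeft (x + y)).tsum_eq F

theorem lintegral_kaimanovich_vershik_le (μ ν ρ : Measure G) [IsProbabilityMeasure μ]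
    [IsProbabilityMeasure ν] [IsProbabilityMeasure ρ] :
    ∫⁻ p : G × G × G, (μ ∗ ρ) {p.1 + p.2.2} * (ν ∗ ρ) {p.2.1 + p.2.2} /
      (ρ {p.2.2} * (μ ∗ ν ∗ ρ) {p.1 + (p.2.1 + p.2.2)}) ∂μ.prod (ν.prod ρ) ≤ 1 := by
  let a : G → ℝ≥0∞ := fun w ↦ (μ ∗ ρ) {w}
  let b : G → ℝ≥0∞ := fun w ↦ (ν ∗ ρ) {w}
  let t : G → ℝ≥0∞ := fun w ↦ (μ ∗ ν ∗ ρ) {w}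
  have ht (w : G) : t w ≠ ∞ := measure_ne_top _ _
  have ht_left (w : G) : t w = ∫⁻ x, b (-x + w) ∂μ := conv_singleton μ (ν ∗ ρ) w
  have ht_right (w : G) : t w = ∫⁻ y, a (-y + w) ∂ν := by
    rw [← conv_singleton ν (μ ∗ ρ) w, ← Measure.conv_assoc, Measure.conv_comm ν,
      Measure.conv_assoc]
  let F : G → G → G → ℝ≥0∞ := fun x y w ↦ b (-x + w) * (a (-y + w) / t w)
  have hcollapse (w : G) : ∫⁻ x, ∫⁻ y, F x y w ∂ν ∂μ = t w * (t w / t w) := by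
    simp only [F, div_eq_mul_inv]
    simp_rw [lintegral_const_mul _ (.of_discrete : Measurable _)]
    rw [lintegral_mul_const _ .of_discrete, lintegral_mul_const _ .of_discrete, ← ht_left,
      ← ht_right]
  rw [lintegral_prod _ Measurable.of_discrete.aemeasurable]
  calc _ ≤ ∫⁻ x, ∫⁻ y, ∑' w, F x y w ∂ν ∂μ := by
        gcongr with x
        rw [lintegral_prod _ Measurable.of_discrete.aemeasurable]
        exact lintegral_mono fun y ↦ lintegral_mul_div_le_tsum ρ a b ht x y
    _ = ∑' w, ∫⁻ x, ∫⁻ y, F x y w ∂ν ∂μ := by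
      rw [← lintegral_tsum fun _ ↦ Measurable.of_discrete.aemeasurable]
      congr! 2 with x
      exact lintegral_tsum fun _ ↦ Measurable.of_discrete.aemeasurable
    _ = ∑' w, t w * (t w / t w) := by simp_rw [hcollapse]
    _ ≤ ∑' w, t w := by gcongr; exact mul_le_of_le_one_right' ENNReal.div_self_le_one
    _ = 1 := by rw [tsum_measure_singleton, measure_univ]

theorem entropy_conv_conv_add_entropy_le (μ ν ρ : Measure G) [IsProbabilityMeasure μ]
    [IsProbabilityMeasure ν] [IsProbabilityMeasure ρ] :
    entropy (μ ∗ ν ∗ ρ) + entropy ρ ≤ entropy (μ ∗ ρ) + entropy (ν ∗ ρ) := by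
  have hadd := measurePreserving_add ν ρ
  have hX : MeasurePreserving (fun p : G × G × G ↦ (p.1, p.2.2)) (μ.prod (ν.prod ρ))
      (μ.prod ρ) := (MeasurePreserving.id μ).prod measurePreserving_snd
  have hXZ := (measurePreserving_add μ ρ).comp hX
  have hYZ := hadd.comp (measurePreserving_snd (μ := μ) (ν := ν.prod ρ))
  have hXYZ := (measurePreserving_add μ (ν ∗ ρ)).comp ((MeasurePreserving.id μ).prod hadd)
  have hZ : MeasurePreserving (fun p : G × G × G ↦ p.2.2) (μ.prod (ν.prod ρ)) ρ :=
    measurePreserving_snd.comp measurePreserving_snd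
  rw [add_comm, entropy_eq_lintegral_of_measurePreserving hXYZ,
    entropy_eq_lintegral_of_measurePreserving hXZ, entropy_eq_lintegral_of_measurePreserving hYZ,
    entropy_eq_lintegral_of_measurePreserving hZ, ← lintegral_add_left .of_discrete,
    ← lintegral_add_left .of_discrete]
  simp_rw [← surprisal_mul prob_le_one prob_le_one]
  exact lintegral_surprisal_le (fun p ↦ mul_le_one' prob_le_one prob_le_one) .of_discrete
    (lintegral_kaimanovich_vershik_le μ ν ρ)

end AddCommGroup

section Quasimorphism

variable {E G : Type*} [AddCommMonoid E] [MeasurableSpace E] [MeasurableAdd₂ E]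
  [AddCommGroup G] [Countable G] [MeasurableSpace G] [MeasurableSingletonClass G]
  {π : E → G} {D : Finset G}

theorem entropy_map_conv_map_le (hπ : Measurable π) (hD : ∀ x y, π (x + y) - (π x + π y) ∈ D)
    (μ ν : Measure E) [IsProbabilityMeasure μ] [IsProbabilityMeasure ν] :
    entropy (μ.map π ∗ ν.map π) ≤
      entropy ((μ ∗ ν).map π) + ENNReal.ofReal (Real.log D.card) := by
  classical
  have : IsProbabilityMeasure (ν.map π) := Measure.isProbabilityMeasure_map hπ.aemeasurable
  rw [← Finset.card_neg]
  refine entropy_le_add_log_card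
    ((measurePreserving_add _ _).comp ((hπ.measurePreserving μ).prod (hπ.measurePreserving ν)))
    ((hπ.measurePreserving _).comp (measurePreserving_add μ ν)) fun p ↦ ?_
  simpa using hD p.1 p.2

theorem entropy_map_conv_conv_le (hπ : Measurable π)
    (hD : ∀ x y, π (x + y) - (π x + π y) ∈ D) (μ ν ρ : Measure E) [IsProbabilityMeasure μ]
    [IsProbabilityMeasure ν] [IsProbabilityMeasure ρ] :
    entropy ((μ ∗ ν ∗ ρ).map π) ≤
      entropy (μ.map π ∗ ν.map π ∗ ρ.map π) + 2 * ENNReal.ofReal (Real.log D.card) := by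
  classical
  have : IsProbabilityMeasure (ν.map π) := Measure.isProbabilityMeasure_map hπ.aemeasurable
  have : IsProbabilityMeasure (ρ.map π) := Measure.isProbabilityMeasure_map hπ.aemeasurable
  have hsum : MeasurePreserving (fun p : E × E × E ↦ p.1 + (p.2.1 + p.2.2)) (μ.prod (ν.prod ρ))
      (μ ∗ ν ∗ ρ) :=
    (measurePreserving_add _ _).comp ((MeasurePreserving.id μ).prod (measurePreserving_add ν ρ))
  have hsum_map : MeasurePreserving (fun p : E × E × E ↦ π p.1 + (π p.2.1 + π p.2.2))
      (μ.prod (ν.prod ρ)) (μ.map π ∗ ν.map π ∗ ρ.map π) :=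
    (measurePreserving_add _ _).comp ((hπ.measurePreserving μ).prod
      ((measurePreserving_add _ _).comp ((hπ.measurePreserving ν).prod (hπ.measurePreserving ρ))))
  have hdefect (p : E × E × E) :
      π (p.1 + (p.2.1 + p.2.2)) - (π p.1 + (π p.2.1 + π p.2.2)) ∈ D + D := by
    convert Finset.add_mem_add (hD p.1 (p.2.1 + p.2.2)) (hD p.2.1 p.2.2) using 1
    abel
  have hD_pos : 0 < D.card := Finset.card_pos.2 ⟨_, hD 0 0⟩
  have hDD_pos : 0 < (D + D).card := Finset.card_pos.2 ⟨_, hdefect 0⟩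
  have hlog : Real.log (D + D).card ≤ 2 * Real.log D.card := by
    rw [two_mul, ← Real.log_mul (by positivity) (by positivity)]
    exact Real.log_le_log (by positivity) (mod_cast Finset.card_add_le)
  calc entropy ((μ ∗ ν ∗ ρ).map π)
    _ ≤ entropy (μ.map π ∗ ν.map π ∗ ρ.map π) + ENNReal.ofReal (Real.log (D + D).card) :=
      entropy_le_add_log_card ((hπ.measurePreserving _).comp hsum) hsum_map hdefect
    _ ≤ entropy (μ.map π ∗ ν.map π ∗ ρ.map π) + ENNReal.ofReal (2 * Real.log D.card) := by gcongr
    _ = entropy (μ.map π ∗ ν.map π ∗ ρ.map π) + 2 * ENNReal.ofReal (Real.log D.card) := by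
      rw [ENNReal.ofReal_mul zero_le_two, ENNReal.ofReal_ofNat]

theorem entropy_map_conv_conv_add_entropy_map_le (hπ : Measurable π)
    (hD : ∀ x y, π (x + y) - (π x + π y) ∈ D) (μ ν ρ : Measure E) [IsProbabilityMeasure μ]
    [IsProbabilityMeasure ν] [IsProbabilityMeasure ρ] :
    entropy ((μ ∗ ν ∗ ρ).map π) + entropy (ρ.map π) ≤
      entropy ((μ ∗ ρ).map π) + entropy ((ν ∗ ρ).map π) +
        4 * ENNReal.ofReal (Real.log D.card) := by
  have hprob (τ : Measure E) [IsProbabilityMeasure τ] : IsProbabilityMeasure (τ.map π) :=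
    Measure.isProbabilityMeasure_map hπ.aemeasurable
  have := hprob μ
  have := hprob ν
  have := hprob ρ
  set L := ENNReal.ofReal (Real.log D.card)
  calc entropy ((μ ∗ ν ∗ ρ).map π) + entropy (ρ.map π)
    _ ≤ entropy (μ.map π ∗ ν.map π ∗ ρ.map π) + 2 * L + entropy (ρ.map π) := by
      gcongr
      exact entropy_map_conv_conv_le hπ hD μ ν ρ
    _ = entropy (μ.map π ∗ ν.map π ∗ ρ.map π) + entropy (ρ.map π) + 2 * L := by ring
    _ ≤ entropy (μ.map π ∗ ρ.map π) + entropy (ν.map π ∗ ρ.map π) + 2 * L := by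
      gcongr ?_ + _
      exact entropy_conv_conv_add_entropy_le (μ.map π) (ν.map π) (ρ.map π)
    _ ≤ entropy ((μ ∗ ρ).map π) + L + (entropy ((ν ∗ ρ).map π) + L) + 2 * L := by
      gcongr
      · exact entropy_map_conv_map_le hπ hD μ ρ
      · exact entropy_map_conv_map_le hπ hD ν ρ
    _ = entropy ((μ ∗ ρ).map π) + entropy ((ν ∗ ρ).map π) + 4 * L := by ring

end Quasimorphism

theorem measurableSet_forall_abs_le {ι : Type*} [Countable ι] (R : ℝ) :
    MeasurableSet {x : ι → ℝ | ∀ i, |x i| ≤ R} := by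
  simp only [Set.ofPred_forall]
  exact .iInter fun i ↦ measurableSet_le (measurable_pi_apply i).abs measurable_const

section Cells

variable {d : ℕ} (χ : Fin d → ℝ) (n : ℕ)

/-- The index of the cell of `𝓔_n` containing `x`. It plays the role of `ξ : ℝ^d → Γ_n`, with `Γ_n`
rescaled to `ℤ^d`. -/
noncomputable def cellIndex (x : Fin d → ℝ) : Fin d → ℤ :=
  fun j ↦ ⌊x j * 2 ^ ⌊χ j * n⌋⌋

theorem measurable_cellIndex : Measurable (cellIndex χ n) :=
  measurable_pi_lambda _ fun j ↦
    Int.measurable_floor.comp ((measurable_pi_apply j).mul_const _)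

theorem Ecell_eq_preimage_cellIndex (k : Fin d → ℤ) :
    Ecell d χ n k = cellIndex χ n ⁻¹' {k} := by
  ext x
  have hpos (j : Fin d) : (0 : ℝ) < 2 ^ ⌊χ j * n⌋ := by positivity
  simp [Ecell, cellIndex, funext_iff, Int.floor_eq_iff, div_le_iff₀ (hpos _),
    lt_div_iff₀ (hpos _)]

theorem cellIndex_add_sub_mem (x y : Fin d → ℝ) :
    cellIndex χ n (x + y) - (cellIndex χ n x + cellIndex χ n y) ∈
      Fintype.piFinset fun _ : Fin d ↦ ({0, 1} : Finset ℤ) := by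
  refine Fintype.mem_piFinset.2 fun j ↦ ?_
  have hle := Int.le_floor_add (x j * 2 ^ ⌊χ j * n⌋) (y j * 2 ^ ⌊χ j * n⌋)
  have hge := Int.le_floor_add_floor (x j * 2 ^ ⌊χ j * n⌋) (y j * 2 ^ ⌊χ j * n⌋)
  simp only [Pi.sub_apply, Pi.add_apply, cellIndex, add_mul, Finset.mem_insert,
    Finset.mem_singleton]
  lia

theorem exists_finset_cellIndex_mem (R : ℝ) :
    ∃ A : Finset (Fin d → ℤ), ∀ x : Fin d → ℝ, (∀ j, |x j| ≤ R) → cellIndex χ n x ∈ A := by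
  refine ⟨Fintype.piFinset fun j ↦
    Finset.Icc ⌊-R * 2 ^ ⌊χ j * n⌋⌋ ⌊R * 2 ^ ⌊χ j * n⌋⌋, fun x hx ↦ ?_⟩
  refine Fintype.mem_piFinset.2 fun j ↦ Finset.mem_Icc.2 ⟨?_, ?_⟩
  · exact Int.floor_mono (by gcongr; exact (abs_le.1 (hx j)).1)
  · exact Int.floor_mono (by gcongr; exact (abs_le.1 (hx j)).2)

/-- The entropy `H(μ, 𝓔_n)` measured in nats and allowed to be `∞`, as opposed to the real-valued
`entE` in bits. -/
noncomputable def cellEntropy (μ : Measure (Fin d → ℝ)) : ℝ≥0∞ :=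
  entropy (μ.map (cellIndex χ n))

theorem entE_eq_toReal_cellEntropy (μ : Measure (Fin d → ℝ)) [IsProbabilityMeasure μ] :
    entE d χ n μ = (cellEntropy χ n μ).toReal / Real.log 2 := by
  have hπ := measurable_cellIndex χ n
  have : IsProbabilityMeasure (μ.map (cellIndex χ n)) :=
    Measure.isProbabilityMeasure_map hπ.aemeasurable
  rw [entE, cellEntropy, toReal_entropy, ← tsum_div_const]
  congr! 2 with k
  rw [Measure.real, Measure.map_apply hπ (measurableSet_singleton k),
    ← Ecell_eq_preimage_cellIndex, Real.negMulLog, Real.logb]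
  ring

theorem cellEntropy_mconv_mconv_add_le (μ ν ρ : Measure (Fin d → ℝ)) [IsProbabilityMeasure μ]
    [IsProbabilityMeasure ν] [IsProbabilityMeasure ρ] :
    cellEntropy χ n (mconv (mconv μ ν) ρ) + cellEntropy χ n ρ ≤
      cellEntropy χ n (mconv μ ρ) + cellEntropy χ n (mconv ν ρ) +
        ENNReal.ofReal (4 * d * Real.log 2) := by
  have hcard : Real.log (Fintype.piFinset fun _ : Fin d ↦ ({0, 1} : Finset ℤ)).card =
      d * Real.log 2 := by simp
  have h := entropy_map_conv_conv_add_entropy_map_le (measurable_cellIndex χ n)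
    (cellIndex_add_sub_mem χ n) μ ν ρ
  rw [hcard, ← ENNReal.ofReal_ofNat, ← ENNReal.ofReal_mul zero_le_four, ← mul_assoc,
    ← Measure.conv_assoc] at h
  exact h

instance (μ ν : Measure (Fin d → ℝ)) [IsProbabilityMeasure μ] [IsProbabilityMeasure ν] :
    IsProbabilityMeasure (mconv μ ν) :=
  inferInstanceAs (IsProbabilityMeasure (μ ∗ ν))

instance (θ : Measure (Fin d → ℝ)) [IsProbabilityMeasure θ] (k : ℕ) :
    IsProbabilityMeasure (mconvPow θ k) := by
  induction k with
  | zero => exact Measure.dirac.isProbabilityMeasure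
  | succ k ih => exact inferInstanceAs (IsProbabilityMeasure (mconv (mconvPow θ k) θ))

theorem cellEntropy_mconv_mconvPow_add_le (θ σ : Measure (Fin d → ℝ)) [IsProbabilityMeasure θ]
    [IsProbabilityMeasure σ] (k : ℕ) :
    cellEntropy χ n (mconv (mconvPow θ k) σ) + k * cellEntropy χ n σ ≤
      cellEntropy χ n σ +
        k * (cellEntropy χ n (mconv θ σ) + ENNReal.ofReal (4 * d * Real.log 2)) := by
  set s := cellEntropy χ n σ
  set t := cellEntropy χ n (mconv θ σ)
  set c := ENNReal.ofReal (4 * d * Real.log 2)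
  induction k with
  | zero =>
    have hzero : mconv (mconvPow θ 0) σ = σ := Measure.dirac_zero_conv σ
    simp [hzero, s]
  | succ k ih =>
    push_cast
    calc cellEntropy χ n (mconv (mconvPow θ (k + 1)) σ) + (k + 1) * s
      _ = cellEntropy χ n (mconv (mconv (mconvPow θ k) θ) σ) + s + k * s := by
        rw [mconvPow]; ring
      _ ≤ cellEntropy χ n (mconv (mconvPow θ k) σ) + t + c + k * s := by
        gcongr ?_ + _
        exact cellEntropy_mconv_mconv_add_le χ n _ θ σ
      _ = cellEntropy χ n (mconv (mconvPow θ k) σ) + k * s + (t + c) := by ring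
      _ ≤ s + k * (t + c) + (t + c) := by gcongr
      _ = s + (k + 1) * (t + c) := by ring

theorem cellEntropy_ne_top_of_mconv {θ σ : Measure (Fin d → ℝ)} [IsProbabilityMeasure θ]
    [IsProbabilityMeasure σ] (h : cellEntropy χ n (mconv θ σ) ≠ ∞) :
    cellEntropy χ n σ ≠ ∞ :=
  ne_top_of_le_ne_top (by finiteness)
    (le_add_self.trans (cellEntropy_mconv_mconv_add_le χ n θ θ σ))

theorem cellEntropy_ne_top_of_ae_abs_le {μ : Measure (Fin d → ℝ)} [IsFiniteMeasure μ] {R : ℝ}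
    (hμ : ∀ᵐ x ∂μ, ∀ j, |x j| ≤ R) : cellEntropy χ n μ ≠ ∞ := by
  obtain ⟨A, hA⟩ := exists_finset_cellIndex_mem χ n R
  exact entropy_ne_top_of_finite_support
    ((ae_map_iff (measurable_cellIndex χ n).aemeasurable A.measurableSet).2 (hμ.mono hA))

theorem ae_abs_le_mconv {θ σ : Measure (Fin d → ℝ)} {R R' : ℝ}
    (hθ : ∀ᵐ x ∂θ, ∀ j, |x j| ≤ R) (hσ : ∀ᵐ x ∂σ, ∀ j, |x j| ≤ R') :
    ∀ᵐ x ∂mconv θ σ, ∀ j, |x j| ≤ R + R' := by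
  rw [mconv, ae_map_iff measurable_add.aemeasurable (measurableSet_forall_abs_le _)]
  filter_upwards [Measure.quasiMeasurePreserving_fst.ae hθ,
    Measure.quasiMeasurePreserving_snd.ae hσ] with p hp_fst hp_snd j
  exact (abs_add_le _ _).trans (add_le_add (hp_fst j) (hp_snd j))

theorem cellEntropy_mconv_ne_top {θ σ : Measure (Fin d → ℝ)} [IsProbabilityMeasure θ]
    [IsProbabilityMeasure σ] (hθ : ∃ R : ℝ, θ {x | ∀ j, |x j| ≤ R} = 1)
    (hσ : ∃ R : ℝ, σ {x | ∀ j, |x j| ≤ R} = 1) : cellEntropy χ n (mconv θ σ) ≠ ∞ := by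
  obtain ⟨R, hR⟩ := hθ
  obtain ⟨R', hR'⟩ := hσ
  exact cellEntropy_ne_top_of_ae_abs_le χ n (ae_abs_le_mconv
    ((mem_ae_iff_prob_eq_one (measurableSet_forall_abs_le R)).2 hR)
    ((mem_ae_iff_prob_eq_one (measurableSet_forall_abs_le R')).2 hR'))

end Cells

theorem stmt11_general {d : ℕ} (χ : Fin d → ℝ) (n : ℕ) (θ σ : Measure (Fin d → ℝ))
    [IsProbabilityMeasure θ] [IsProbabilityMeasure σ]
    (hθσ : cellEntropy χ n (mconv θ σ) ≠ ∞) (k : ℕ) :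
    entE d χ n (mconv (mconvPow θ k) σ) - entE d χ n σ ≤
      (k : ℝ) * (entE d χ n (mconv θ σ) - entE d χ n σ) + 4 * d * k := by
  have hσ : cellEntropy χ n σ ≠ ∞ := cellEntropy_ne_top_of_mconv χ n hθσ
  have hlog : 0 < Real.log 2 := Real.log_pos one_lt_two
  have hiter := ENNReal.toReal_mono (by finiteness) (cellEntropy_mconv_mconvPow_add_le χ n θ σ k)
  rw [ENNReal.toReal_add (ne_top_of_le_ne_top (by finiteness) (le_self_add.trans
    (cellEntropy_mconv_mconvPow_add_le χ n θ σ k))) (by finiteness),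
    ENNReal.toReal_add hσ (by finiteness), ENNReal.toReal_mul, ENNReal.toReal_mul,
    ENNReal.toReal_add hθσ (by finiteness), ENNReal.toReal_natCast,
    ENNReal.toReal_ofReal (by positivity)] at hiter
  simp only [entE_eq_toReal_cellEntropy]
  field_simp
  linarith

/-- Discretized Kaimanovich–Vershik: for compactly supported probability measures
`θ, σ` on `ℝ^d`, `H(θ^{*k} * σ, 𝓔_n) − H(σ, 𝓔_n) ≤ k (H(θ*σ, 𝓔_n) − H(σ, 𝓔_n)) + O(k)`,
the implicit constant depending only on `d` and `χ₁,…,χ_d`. -/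
theorem stmt11 (d : ℕ) (hd : 1 ≤ d) (χ : Fin d → ℝ) (hχ : ∀ j, 0 < χ j) :
    ∃ K : ℝ, 0 < K ∧
      ∀ (n : ℕ) (θ σ : Measure (Fin d → ℝ)),
        IsProbabilityMeasure θ → IsProbabilityMeasure σ →
        (∃ R : ℝ, θ {x | ∀ j, |x j| ≤ R} = 1) →
        (∃ R : ℝ, σ {x | ∀ j, |x j| ≤ R} = 1) →
        ∀ k : ℕ, 1 ≤ k →
          entE d χ n (mconv (mconvPow θ k) σ) - entE d χ n σ ≤
            (k : ℝ) * (entE d χ n (mconv θ σ) - entE d χ n σ) + K * k :=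
  ⟨4 * d, by positivity, fun n θ σ _ _ hθ hσ k _ ↦
    stmt11_general χ n θ σ (cellEntropy_mconv_ne_top χ n hθ hσ) k⟩
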